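/- There exists a matrix g ∈ GL(4,ℂ) and a nonzero scalar c ∈ ℂ such that the polynomial f' = x⁴+y⁴+z⁴+t⁴+12xyzt (Mukai's invariant quartic, the Maschke quartic) satisfies f'(g·v) = c·f₀(v) for all v ∈ ℂ⁴; i.e., the quartic surfaces {f' = 0} and {f₀ = 0} in ℙ³(ℂ) are projectively equivalent. Explicitly, the composite of the substitutions x ↦ x-y, y ↦ x+y, z ↦ z-t, t ↦ z+t followed by x ↦ ix, t ↦ it carries f' to 2f₀. -/

import Mathlib

open Matrix Complex MvPolynomial

/-- Mukai's quartic `f₀ = Σ x⁴ − 6 Σ x²y²` in `ℂ[x,y,z,t]`. -/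
noncomputable def f0 : MvPolynomial (Fin 4) ℂ :=
  X 0 ^ 4 + X 1 ^ 4 + X 2 ^ 4 + X 3 ^ 4 -
    6 * (X 0 ^ 2 * X 1 ^ 2 + X 0 ^ 2 * X 2 ^ 2 + X 0 ^ 2 * X 3 ^ 2 +
         X 1 ^ 2 * X 2 ^ 2 + X 1 ^ 2 * X 3 ^ 2 + X 2 ^ 2 * X 3 ^ 2)

/-- The Maschke quartic `f' = x⁴ + y⁴ + z⁴ + t⁴ + 12xyzt`. -/
noncomputable def f' : MvPolynomial (Fin 4) ℂ :=
  X 0 ^ 4 + X 1 ^ 4 + X 2 ^ 4 + X 3 ^ 4 + 12 * (X 0 * X 1 * X 2 * X 3)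

/-- The matrix of the substitution `x ↦ x-y, y ↦ x+y, z ↦ z-t, t ↦ z+t`. -/
def Msub : Matrix (Fin 4) (Fin 4) ℂ := !![1,-1,0,0; 1,1,0,0; 0,0,1,-1; 0,0,1,1]

/-- The matrix of the substitution `x ↦ ix, t ↦ it`. -/
noncomputable def Dsub : Matrix (Fin 4) (Fin 4) ℂ := !![I,0,0,0; 0,1,0,0; 0,0,1,0; 0,0,0,I]

/-! Substituting `x ± y`, `z ± t` turns the sum of fourth powers into an even quartic and the
product `xyzt` into `(x² - y²)(z² - t²)`. Up to a factor `2`, this leaves `x⁴ + y⁴ + z⁴ + t⁴` and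
the six products of two squares, with coefficients `±6`; the minus signs sit on `x²t²` and `y²z²`.
Negating `x²` and `t²` fixes these two products and negates the other four, so all six get the
coefficient `-6`. -/

section Ring

variable (R : Type*) [CommRing R]

/-- Mukai's quartic `f₀` over an arbitrary commutative ring. -/
noncomputable def mukaiQuartic : MvPolynomial (Fin 4) R :=
  X 0 ^ 4 + X 1 ^ 4 + X 2 ^ 4 + X 3 ^ 4 -
    6 * (X 0 ^ 2 * X 1 ^ 2 + X 0 ^ 2 * X 2 ^ 2 + X 0 ^ 2 * X 3 ^ 2 +
         X 1 ^ 2 * X 2 ^ 2 + X 1 ^ 2 * X 3 ^ 2 + X 2 ^ 2 * X 3 ^ 2)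

/-- The Maschke quartic `f'` over an arbitrary commutative ring. -/
noncomputable def maschkeQuartic : MvPolynomial (Fin 4) R :=
  X 0 ^ 4 + X 1 ^ 4 + X 2 ^ 4 + X 3 ^ 4 + 12 * (X 0 * X 1 * X 2 * X 3)

/-- The matrix of the substitution `x ↦ x - y, y ↦ x + y, z ↦ z - t, t ↦ z + t` over an arbitrary
commutative ring, acting on column vectors. -/
def subAddMatrix : Matrix (Fin 4) (Fin 4) R :=
  !![1, -1, 0, 0; 1, 1, 0, 0; 0, 0, 1, -1; 0, 0, 1, 1]

variable {R}

/-- The matrix of the substitution `x ↦ ix, t ↦ it`, for an arbitrary ring element `i` (in the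
application, a square root of `-1`). -/
def twistMatrix (i : R) : Matrix (Fin 4) (Fin 4) R :=
  !![i, 0, 0, 0; 0, 1, 0, 0; 0, 0, 1, 0; 0, 0, 0, i]

lemma eval_mukaiQuartic (v : Fin 4 → R) :
    eval v (mukaiQuartic R) =
      v 0 ^ 4 + v 1 ^ 4 + v 2 ^ 4 + v 3 ^ 4 -
        6 * (v 0 ^ 2 * v 1 ^ 2 + v 0 ^ 2 * v 2 ^ 2 + v 0 ^ 2 * v 3 ^ 2 +
          v 1 ^ 2 * v 2 ^ 2 + v 1 ^ 2 * v 3 ^ 2 + v 2 ^ 2 * v 3 ^ 2) := by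
  simp [mukaiQuartic]

lemma eval_maschkeQuartic (v : Fin 4 → R) :
    eval v (maschkeQuartic R) =
      v 0 ^ 4 + v 1 ^ 4 + v 2 ^ 4 + v 3 ^ 4 + 12 * (v 0 * v 1 * v 2 * v 3) := by
  simp [maschkeQuartic]

lemma subAddMatrix_mulVec (v : Fin 4 → R) :
    subAddMatrix R *ᵥ v = ![v 0 - v 1, v 0 + v 1, v 2 - v 3, v 2 + v 3] := by
  ext j
  fin_cases j <;> simp [subAddMatrix, mulVec, dotProduct, Fin.sum_univ_four, sub_eq_add_neg]

lemma twistMatrix_mulVec (i : R) (v : Fin 4 → R) :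
    twistMatrix i *ᵥ v = ![i * v 0, v 1, v 2, i * v 3] := by
  ext j
  fin_cases j <;> simp [twistMatrix, mulVec, dotProduct, Fin.sum_univ_four]

lemma det_subAddMatrix : (subAddMatrix R).det = 2 ^ 2 := by
  let B : Matrix (Fin 2) (Fin 2) R := !![1, -1; 1, 1]
  have hblocks : subAddMatrix R = (fromBlocks B 0 0 B).reindex finSumFinEquiv finSumFinEquiv := by
    ext j k
    fin_cases j <;> fin_cases k <;> rfl
  have hB : B.det = 2 := by
    rw [det_fin_two_of]
    ring
  rw [hblocks, det_reindex_self, det_fromBlocks_zero₂₁, hB, sq]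

lemma det_twistMatrix (i : R) : (twistMatrix i).det = i ^ 2 := by
  have hdiag : twistMatrix i = diagonal ![i, 1, 1, i] := by
    ext j k
    fin_cases j <;> fin_cases k <;> rfl
  simp [hdiag, Fin.prod_univ_four, sq]

lemma isUnit_det_subAddMatrix_mul_twistMatrix {i : R} (h2 : IsUnit (2 : R)) (hi : i ^ 2 = -1) :
    IsUnit (subAddMatrix R * twistMatrix i).det := by
  rw [det_mul, det_subAddMatrix, det_twistMatrix, hi]
  exact (h2.pow 2).mul isUnit_one.neg

lemma eval_subAddMatrix_mulVec_maschkeQuartic (v : Fin 4 → R) :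
    eval (subAddMatrix R *ᵥ v) (maschkeQuartic R) =
      2 * (v 0 ^ 4 + v 1 ^ 4 + v 2 ^ 4 + v 3 ^ 4 +
        6 * (v 0 ^ 2 * v 1 ^ 2 + v 0 ^ 2 * v 2 ^ 2 - v 0 ^ 2 * v 3 ^ 2 -
          v 1 ^ 2 * v 2 ^ 2 + v 1 ^ 2 * v 3 ^ 2 + v 2 ^ 2 * v 3 ^ 2)) := by
  rw [eval_maschkeQuartic, subAddMatrix_mulVec]
  simp only [cons_val]
  ring

theorem eval_subAddMatrix_mul_twistMatrix_mulVec_maschkeQuartic {i : R} (hi : i ^ 2 = -1)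
    (v : Fin 4 → R) :
    eval ((subAddMatrix R * twistMatrix i) *ᵥ v) (maschkeQuartic R) =
      2 * eval v (mukaiQuartic R) := by
  have hi4 : i ^ 4 = 1 := by rw [pow_mul i 2 2, hi, neg_one_sq]
  rw [← mulVec_mulVec, eval_subAddMatrix_mulVec_maschkeQuartic, twistMatrix_mulVec,
    eval_mukaiQuartic]
  simp only [cons_val, mul_pow, hi, hi4]
  ring

theorem stmt_16_general {i : R} (hi : i ^ 2 = -1) (h2 : IsUnit (2 : R)) :
    (∃ g : Matrix (Fin 4) (Fin 4) R, IsUnit g.det ∧ ∃ c : R, IsUnit c ∧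
      ∀ v : Fin 4 → R, eval (g *ᵥ v) (maschkeQuartic R) = c * eval v (mukaiQuartic R)) ∧
    (∀ v : Fin 4 → R, eval ((subAddMatrix R * twistMatrix i) *ᵥ v) (maschkeQuartic R) =
      2 * eval v (mukaiQuartic R)) :=
  have key := eval_subAddMatrix_mul_twistMatrix_mulVec_maschkeQuartic hi
  ⟨⟨subAddMatrix R * twistMatrix i, isUnit_det_subAddMatrix_mul_twistMatrix h2 hi, 2, h2, key⟩, key⟩

end Ring

/-- There is `g ∈ GL(4,ℂ)` and `c ≠ 0` with `f'(g·v) = c·f₀(v)` for all `v`, so the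
quartics `{f' = 0}` and `{f₀ = 0}` are projectively equivalent; explicitly, the
composite of `x ↦ x-y, y ↦ x+y, z ↦ z-t, t ↦ z+t` followed by `x ↦ ix, t ↦ it`
carries `f'` to `2f₀`. -/
theorem stmt_16 :
    (∃ g : Matrix (Fin 4) (Fin 4) ℂ, IsUnit g.det ∧
      ∃ c : ℂ, c ≠ 0 ∧ ∀ v : Fin 4 → ℂ, eval (g.mulVec v) f' = c * eval v f0) ∧
    (∀ v : Fin 4 → ℂ, eval ((Msub * Dsub).mulVec v) f' = 2 * eval v f0) := by
  obtain ⟨⟨g, hg, c, hc, hgc⟩, key⟩ := stmt_16_general I_sq (two_ne_zero (α := ℂ)).isUnit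
  -- `f'`, `f0` and `Msub * Dsub` are definitionally the case `R = ℂ`, `i = I` of the general ones.
  exact ⟨⟨g, hg, c, hc.ne_zero, hgc⟩, key⟩
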